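/- Let (T_n) be a sequence of subsets of ℝ with accumulating renormalizations, and let (g_n) be a sequence in G = PSL(2,ℂ) with g_n → e and g_n ∉ VH = {vh : v ∈ V, h ∈ H} for all n. Then the set V ∩ limsup_n {u_t g_n h : t ∈ T_n, h ∈ H} accumulates at e and at ∞. -/

import Mathlib

open scoped MatrixGroups
open Matrix Filter

noncomputable section

/-- `SL(2,ℂ)`. -/
abbrev SL2C := Matrix.SpecialLinearGroup (Fin 2) ℂ

instance : TopologicalSpace SL2C := instTopologicalSpaceSubtype

/-- `G = PSL(2,ℂ) = SL(2,ℂ)/{±I}`, with the quotient topology. -/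
abbrev PSL2C := Matrix.ProjectiveSpecialLinearGroup (Fin 2) ℂ

/-- The projection `π : SL(2,ℂ) → PSL(2,ℂ)`. -/
def pr : SL2C →* PSL2C := QuotientGroup.mk' _

/-- The upper triangular unipotent matrix `[[1, t],[0, 1]]` as an element of `SL(2,ℂ)`. -/
def uMat (t : ℂ) : SL2C := ⟨!![1, t; 0, 1], by simp [Matrix.det_fin_two_of]⟩

/-- `u_t = π [[1, t],[0, 1]]` for `t ∈ ℝ`. -/
def uu (t : ℝ) : PSL2C := pr (uMat t)

/-- `v_s = π [[1, is],[0, 1]]` for `s ∈ ℝ`. -/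
def vv (s : ℝ) : PSL2C := pr (uMat (s * Complex.I))

/-- The subgroup `U = {u_t : t ∈ ℝ}` as a subset of `PSL(2,ℂ)`. -/
def Uset : Set PSL2C := Set.range uu

/-- The subgroup `V = {v_s : s ∈ ℝ}` as a subset of `PSL(2,ℂ)`. -/
def Vset : Set PSL2C := Set.range vv

/-- The subgroup `N = {π [[1, z],[0,1]] : z ∈ ℂ}` as a subset of `PSL(2,ℂ)`. -/
def Nset : Set PSL2C := {x | ∃ z : ℂ, x = pr (uMat z)}

/-- `H = π (SL(2,ℝ))`, the image in `PSL(2,ℂ)` of the real matrices. -/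
def Hset : Set PSL2C :=
  {x | ∃ g : Matrix.SpecialLinearGroup (Fin 2) ℝ,
    x = pr (Matrix.SpecialLinearGroup.map (algebraMap ℝ ℂ) g)}

/-- The upper triangular matrix `[[a, z],[0, a⁻¹]]` as an element of `SL(2,ℂ)`,
for a nonzero real `a`. -/
def tri (a : ℝ) (ha : a ≠ 0) (z : ℂ) : SL2C :=
  ⟨!![(a : ℂ), z; 0, (a : ℂ)⁻¹], by
    have h : (a : ℂ) ≠ 0 := by exact_mod_cast ha
    simp [Matrix.det_fin_two_of, mul_inv_cancel₀ h]⟩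

/-- `AN = {π [[a, z],[0, a⁻¹]] : a > 0 real, z ∈ ℂ}`. -/
def ANset : Set PSL2C := {x | ∃ (a : ℝ) (ha : 0 < a) (z : ℂ), x = pr (tri a ha.ne' z)}

/-- `AV = {π [[a, ib],[0, a⁻¹]] : a > 0 real, b ∈ ℝ}`. -/
def AVset : Set PSL2C :=
  {x | ∃ (a : ℝ) (ha : 0 < a) (b : ℝ), x = pr (tri a ha.ne' (b * Complex.I))}

/-- `A = {π diag(a, a⁻¹) : a > 0 real}`. -/
def Aset : Set PSL2C := {x | ∃ (a : ℝ) (ha : 0 < a), x = pr (tri a ha.ne' 0)}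

variable (Γ : Subgroup PSL2C)

/-- The space `Γ\\G` of right cosets `Γg`, with the quotient topology. -/
abbrev XΓ := Quotient (QuotientGroup.rightRel Γ)

/-- The natural projection `G → Γ\\G`. -/
def mkX (g : PSL2C) : XΓ Γ := Quotient.mk'' g

/-- The right translation action of `G` on `Γ\\G`: `(Γg₀)·g = Γ(g₀g)`. -/
def act (x : XΓ Γ) (g : PSL2C) : XΓ Γ :=
  Quotient.map' (fun h => h * g)
    (fun a b hab => by
      rw [QuotientGroup.rightRel_apply] at hab ⊢
      simpa [_root_.mul_inv_rev, mul_assoc] using hab) x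

/-- The orbit `xS = {x·s : s ∈ S}` of a point `x ∈ Γ\\G` under a subset `S ⊆ G`. -/
def orb (x : XΓ Γ) (S : Set PSL2C) : Set (XΓ Γ) := (fun s => act Γ x s) '' S

/-- `Γ` is a lattice in `G`: there is a nonzero finite Borel measure on `Γ\\G`
invariant under the right translation action of `G`. -/
def IsLattice : Prop :=
  letI : MeasurableSpace (XΓ Γ) := borel _
  ∃ μ : MeasureTheory.Measure (XΓ Γ), μ ≠ 0 ∧ MeasureTheory.IsFiniteMeasure μ ∧
    ∀ g : PSL2C, MeasureTheory.Measure.map (fun x => act Γ x g) μ = μ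


/-- The topological `limsup` of a sequence of subsets of a topological space:
the set of points `x` such that every neighborhood of `x` meets `Q n` for
infinitely many `n`. -/
def seqLimsup {α : Type*} [TopologicalSpace α] (Q : ℕ → Set α) : Set α :=
  {x | ∀ O ∈ nhds x, {n | (O ∩ Q n).Nonempty}.Infinite}


/-- A sequence `T : ℕ → Set ℝ` has accumulating renormalizations if for every
sequence `λ_n → +∞` of positive reals, the set `T_∞ = limsup_n λ_n⁻¹ T_n`
contains a sequence of nonzero elements tending to `0`, as well as a sequence
whose absolute values tend to `+∞`. -/
def HasAccumulatingRenormalizations (T : ℕ → Set ℝ) : Prop :=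
  ∀ lam : ℕ → ℝ, (∀ n, 0 < lam n) → Tendsto lam atTop atTop →
    (∃ s : ℕ → ℝ,
      (∀ k, s k ∈ seqLimsup (fun n => (fun t => (lam n)⁻¹ * t) '' T n) ∧ s k ≠ 0) ∧
      Tendsto s atTop (nhds 0)) ∧
    (∃ s : ℕ → ℝ,
      (∀ k, s k ∈ seqLimsup (fun n => (fun t => (lam n)⁻¹ * t) '' T n)) ∧
      Tendsto (fun k => |s k|) atTop atTop)

/-- A single subset `T ⊆ ℝ` has accumulating renormalizations if the constant
sequence `T_n = T` does. -/
def HasAccumulatingRenormalizationsSet (T : Set ℝ) : Prop :=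
  HasAccumulatingRenormalizations (fun _ => T)


/-- A subset `S ⊆ PSL(2,ℂ)` accumulates at `e` and at `∞`: `S ∖ {e}` contains a
sequence converging to `e`, and `S` contains a sequence eventually leaving
every compact subset. -/
def AccumulatesAtIdAndInfty (S : Set PSL2C) : Prop :=
  (∃ s : ℕ → PSL2C, (∀ k, s k ∈ S ∧ s k ≠ 1) ∧ Tendsto s atTop (nhds 1)) ∧
  (∃ s : ℕ → PSL2C, (∀ k, s k ∈ S) ∧
    ∀ K : Set PSL2C, IsCompact K → ∀ᶠ k in atTop, s k ∉ K)


lemma rub_exists_level (a b y : ℝ) (hab : 0 < |a| + |b|) (hy : 0 < y) :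
    ∃ x : ℝ, 0 < x ∧ |a| * x + |b| * x ^ 2 = y := by
  have hc : ContinuousOn (fun x : ℝ => |a| * x + |b| * x ^ 2)
      (Set.Icc 0 (1 + y / (|a| + |b|))) := by fun_prop
  have h0 : (0 : ℝ) ≤ 1 + y / (|a| + |b|) := by positivity
  have := intermediate_value_Icc h0 hc
  have hy' : y ∈ Set.Icc ((fun x : ℝ => |a| * x + |b| * x ^ 2) 0)
      ((fun x : ℝ => |a| * x + |b| * x ^ 2) (1 + y / (|a| + |b|))) := by
    refine ⟨by simpa using hy.le, ?_⟩
    have h1 : y = (|a| + |b|) * (y / (|a| + |b|)) := by field_simp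
    have h2 : 0 < y / (|a| + |b|) := by positivity
    set z := y / (|a| + |b|)
    simp only
    rw [h1]
    nlinarith [mul_nonneg (abs_nonneg b) h2.le, mul_nonneg (abs_nonneg b) (sq_nonneg z),
      abs_nonneg a, abs_nonneg b]
  obtain ⟨x, hx, hxy⟩ := this hy'
  refine ⟨x, ?_, hxy⟩
  rcases hx.1.lt_or_eq with h | h
  · exact h
  · simp only [← h] at hxy
    simp at hxy
    linarith

/-- the bounds at a good scale -/
lemma rub_window (a b x w y : ℝ) (hw : 3 ≤ w) (hx : 0 < x)
    (hy : |a| * x + |b| * x ^ 2 = y)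
    (hgood : |a| * w ^ 2 ≤ |b| * x ∨ |b| * x * w ^ 2 ≤ |a|) (t : ℝ)
    (h1 : x ≤ |t| * w) (h2 : |t| ≤ x * w) :
    y ≤ |a * t + b * t ^ 2| * w ^ 3 ∧ |a * t + b * t ^ 2| ≤ y * w ^ 2 := by
  have ha := abs_nonneg a
  have hb := abs_nonneg b
  have ht : 0 < |t| := by
    by_contra h
    have : |t| = 0 := le_antisymm (not_lt.1 h) (abs_nonneg t)
    rw [this] at h1; linarith
  have hw0 : 0 < w := by linarith
  set A := |a| with hA
  set B := |b| with hB
  set s := |t| with hs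
  have e1 : |a * t| = A * s := abs_mul _ _
  have e2 : |b * t ^ 2| = B * s ^ 2 := by rw [abs_mul, abs_pow]
  have up : |a * t + b * t ^ 2| ≤ A * s + B * s ^ 2 := by
    rw [← e1, ← e2]; exact abs_add_le _ _
  have low1 : A * s - B * s ^ 2 ≤ |a * t + b * t ^ 2| := by
    have := abs_sub_abs_le_abs_sub (a * t) (-(b * t ^ 2))
    rw [abs_neg, e1, e2, sub_neg_eq_add] at this; exact this
  have low2 : B * s ^ 2 - A * s ≤ |a * t + b * t ^ 2| := by
    have := abs_sub_abs_le_abs_sub (b * t ^ 2) (-(a * t))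
    rw [abs_neg, e1, e2, sub_neg_eq_add, add_comm] at this; exact this
  have hF1 : y ≤ (A * s + B * s ^ 2) * w ^ 2 := by
    have i1 : A * x ≤ A * s * w ^ 2 := by
      have : A * x ≤ A * (s * w) := by gcongr
      have : A * (s * w) * 1 ≤ A * (s * w) * w := by gcongr; linarith
      nlinarith
    have i2 : B * x ^ 2 ≤ B * (s * w) ^ 2 := by gcongr
    nlinarith
  have hF2 : A * s + B * s ^ 2 ≤ y * w ^ 2 := by
    have i1 : A * s ≤ A * x * w ^ 2 := by
      have : A * s ≤ A * (x * w) := by gcongr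
      have : A * (x * w) * 1 ≤ A * (x * w) * w := by gcongr; linarith
      nlinarith
    have i2 : B * s ^ 2 ≤ B * (x * w) ^ 2 := by gcongr
    nlinarith
  refine ⟨?_, up.trans hF2⟩
  have key : A * s + B * s ^ 2 ≤ |a * t + b * t ^ 2| * w := by
    set P := |a * t + b * t ^ 2|
    have hP : 0 ≤ P := abs_nonneg _
    suffices A * s + B * s ^ 2 ≤ P * 3 by nlinarith
    rcases hgood with h | h
    · -- 3 A s ≤ ... ≤ B s^2
      have : A * 3 ≤ B * s := by
        have j1 : A * w ^ 2 ≤ B * (s * w) := h.trans (by gcongr)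
        have j2 : A * w ≤ B * s := by
          have : (A * w) * w ≤ (B * s) * w := by nlinarith
          exact le_of_mul_le_mul_right this hw0
        exact le_trans (by gcongr) j2
      nlinarith
    · have : B * s * 3 ≤ A := by
        have j1 : B * s * w ≤ B * (x * w) * w := by gcongr
        have j2 : B * s * 3 ≤ B * s * w := by gcongr
        nlinarith
      nlinarith
  calc y ≤ (A * s + B * s ^ 2) * w ^ 2 := hF1
    _ ≤ (|a * t + b * t ^ 2| * w) * w ^ 2 := by gcongr
    _ = _ := by ring

lemma rub_large_level (a b x w l y : ℝ) (hw : 3 ≤ w) (hl : 0 < l) (hx : 0 < x)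
    (hy : |a| * x + |b| * x ^ 2 = y) (hly : l * w ^ 3 ≤ y) (hab : |a| + |b| ≤ l / w) : w ≤ x := by
  by_contra! h
  have hw0 : 0 < w := by linarith
  have ha := abs_nonneg a
  have hb := abs_nonneg b
  have h1 : |a| * x + |b| * x ^ 2 ≤ (|a| + |b|) * w ^ 2 := by
    have : |a| * x ≤ |a| * w ^ 2 := by gcongr; nlinarith
    have : |b| * x ^ 2 ≤ |b| * w ^ 2 := by gcongr
    nlinarith
  have h2 : (|a| + |b|) * w ^ 2 ≤ l / w * w ^ 2 := by gcongr
  have h3 : l / w * w ^ 2 = l * w := by field_simp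
  have h4 : l * w < l * w ^ 3 := by
    gcongr
    nlinarith [mul_pos hw0 hw0]
  linarith

lemma rub_exists_scale (a b w l : ℝ) (hw : 3 ≤ w) (hl : 0 < l) (h0 : 0 < |a| + |b|)
    (hab : |a| + |b| ≤ l / w) :
    ∃ x : ℝ, w ≤ x ∧ ∀ t : ℝ, x ≤ |t| * w → |t| ≤ x * w →
      l ≤ |a * t + b * t ^ 2| ∧ |a * t + b * t ^ 2| ≤ l * w ^ 16 := by
  have hw0 : 0 < w := by linarith
  have hw1 : 1 ≤ w := by linarith
  obtain ⟨x1, hx1, hy1⟩ := rub_exists_level a b (l * w ^ 3) h0 (by positivity)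
  obtain ⟨x2, hx2, hy2⟩ := rub_exists_level a b (l * w ^ 13) h0 (by positivity)
  by_cases hg1 : |a| * w ^ 2 ≤ |b| * x1 ∨ |b| * x1 * w ^ 2 ≤ |a|
  · refine ⟨x1, rub_large_level a b x1 w l _ hw hl hx1 hy1 le_rfl hab, fun t h1 h2 => ?_⟩
    obtain ⟨k1, k2⟩ := rub_window a b x1 w _ hw hx1 hy1 hg1 t h1 h2
    refine ⟨le_of_mul_le_mul_right k1 (by positivity), k2.trans ?_⟩
    rw [mul_assoc, ← pow_add]
    gcongr <;> norm_num [hw1]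
  by_cases hg2 : |a| * w ^ 2 ≤ |b| * x2 ∨ |b| * x2 * w ^ 2 ≤ |a|
  · refine ⟨x2, rub_large_level a b x2 w l _ hw hl hx2 hy2 (by gcongr <;> norm_num [hw1]) hab,
      fun t h1 h2 => ?_⟩
    obtain ⟨k1, k2⟩ := rub_window a b x2 w _ hw hx2 hy2 hg2 t h1 h2
    constructor
    · have : l * w ^ 3 ≤ l * w ^ 13 := by gcongr <;> norm_num [hw1]
      exact le_of_mul_le_mul_right (this.trans k1) (by positivity)
    · refine k2.trans ?_
      rw [mul_assoc, ← pow_add]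
      gcongr <;> norm_num [hw1]
  exfalso
  push Not at hg1 hg2
  have hb : 0 < |b| := by
    by_contra h
    have hb0 : |b| = 0 := le_antisymm (not_lt.1 h) (abs_nonneg b)
    rw [hb0] at hg1 h0
    nlinarith [hg1.2]
  have h3 : |b| * x2 ≤ |b| * (x1 * w ^ 4) := by
    have : |a| * w ^ 2 ≤ |b| * x1 * w ^ 2 * w ^ 2 := by gcongr; exact hg1.2.le
    nlinarith [hg2.1]
  have h4 : x2 ≤ x1 * w ^ 4 := le_of_mul_le_mul_left h3 hb
  have h5 : |a| * x2 + |b| * x2 ^ 2 ≤ (|a| * x1 + |b| * x1 ^ 2) * w ^ 8 := by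
    have i1 : |a| * x2 ≤ |a| * (x1 * w ^ 4) := by gcongr
    have i2 : |b| * x2 ^ 2 ≤ |b| * (x1 * w ^ 4) ^ 2 := by gcongr
    have i3 : |a| * (x1 * w ^ 4) ≤ |a| * (x1 * w ^ 8) := by gcongr <;> norm_num [hw1]
    nlinarith
  rw [hy1, hy2, mul_assoc, ← pow_add] at h5
  have h6 : l * w ^ (3 + 8) < l * w ^ 13 := by gcongr <;> norm_num; linarith
  linarith

lemma rub_diag (P : ℕ → ℕ → Prop) (h : ∀ K, ∀ᶠ n in atTop, P K n) :
    ∃ k : ℕ → ℕ, Tendsto k atTop atTop ∧ ∀ᶠ n in atTop, P (k n) n := by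
  classical
  refine ⟨fun n => Nat.findGreatest (fun K => P K n) n, ?_, ?_⟩
  · rw [tendsto_atTop]
    intro K
    filter_upwards [h K, eventually_ge_atTop K] with n h1 h2
    exact Nat.le_findGreatest h2 h1
  · filter_upwards [h 0] with n h1
    exact Nat.findGreatest_spec (P := fun K => P K n) (Nat.zero_le n) h1

lemma rub_core (T : ℕ → Set ℝ) (hT : HasAccumulatingRenormalizations T) (a b l : ℕ → ℝ)
    (ha : Tendsto a atTop (nhds 0)) (hb : Tendsto b atTop (nhds 0))
    (hab : ∀ᶠ n in atTop, 0 < |a n| + |b n|) (hl : ∀ K, 0 < l K) :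
    ∃ K : ℕ, ∃ᶠ n in atTop, ∃ t ∈ T n, l K ≤ |a n * t + b n * t ^ 2| ∧
      |a n * t + b n * t ^ 2| ≤ l K * ((K : ℝ) + 3) ^ 16 := by
  by_contra! hcon
  have hsum : Tendsto (fun n => |a n| + |b n|) atTop (nhds 0) := by
    simpa using ha.abs.add hb.abs
  have hP : ∀ K : ℕ, ∀ᶠ n in atTop, (¬ ∃ t ∈ T n, l K ≤ |a n * t + b n * t ^ 2| ∧
      |a n * t + b n * t ^ 2| ≤ l K * ((K : ℝ) + 3) ^ 16) ∧ 0 < |a n| + |b n| ∧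
      |a n| + |b n| ≤ l K / ((K : ℝ) + 3) := by
    intro K
    have h1 : ∀ᶠ n in atTop, |a n| + |b n| ≤ l K / ((K : ℝ) + 3) :=
      hsum.eventually_le_const (by have := hl K; positivity)
    have h2 := not_frequently.1 (fun h => absurd h (by simpa [Filter.Frequently] using hcon K) :
      ¬ ∃ᶠ n in atTop, ∃ t ∈ T n, l K ≤ |a n * t + b n * t ^ 2| ∧
      |a n * t + b n * t ^ 2| ≤ l K * ((K : ℝ) + 3) ^ 16)
    filter_upwards [h1, h2, hab] with n i1 i2 i3
    exact ⟨i2, i3, i1⟩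
  obtain ⟨k, hk, hkP⟩ := rub_diag _ hP
  have hex : ∀ n, ∃ x : ℝ, 0 < x ∧ (k n : ℝ) ≤ x ∧ ((0 < |a n| + |b n| ∧
      |a n| + |b n| ≤ l (k n) / ((k n : ℝ) + 3)) → ∀ t : ℝ, x ≤ |t| * ((k n : ℝ) + 3) →
      |t| ≤ x * ((k n : ℝ) + 3) → l (k n) ≤ |a n * t + b n * t ^ 2| ∧
        |a n * t + b n * t ^ 2| ≤ l (k n) * ((k n : ℝ) + 3) ^ 16) := by
    intro n
    have hk0 : (0 : ℝ) ≤ k n := Nat.cast_nonneg _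
    by_cases h : 0 < |a n| + |b n| ∧ |a n| + |b n| ≤ l (k n) / ((k n : ℝ) + 3)
    · obtain ⟨x, hx, hx2⟩ := rub_exists_scale (a n) (b n) ((k n : ℝ) + 3) (l (k n)) (by linarith)
        (hl _) h.1 h.2
      exact ⟨x, by linarith, by linarith, fun _ => hx2⟩
    · exact ⟨k n + 1, by positivity, by linarith, fun h' => absurd h' h⟩
  choose lam hlam0 hlamk hlam using hex
  have hkR : Tendsto (fun n => (k n : ℝ)) atTop atTop := tendsto_natCast_atTop_atTop.comp hk
  obtain ⟨⟨s, hs, -⟩, -⟩ := hT lam hlam0 (tendsto_atTop_mono hlamk hkR)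
  obtain ⟨hs, hs0⟩ := hs 0
  have hpos : 0 < |s 0| := abs_pos.2 hs0
  have hO : {x : ℝ | |s 0| / 2 < |x| ∧ |x| < 2 * |s 0|} ∈ nhds (s 0) := by
    apply IsOpen.mem_nhds
    · exact (isOpen_lt continuous_const continuous_abs).inter
        (isOpen_lt continuous_abs continuous_const)
    · constructor <;> linarith
  have hinf := Nat.frequently_atTop_iff_infinite.2 (hs _ hO)
  obtain ⟨n, ⟨τ, hτ, t, htT, rfl⟩, hn, h1, h2⟩ := (hinf.and_eventually (hkP.and
    ((hkR.eventually_ge_atTop (2 / |s 0|)).and (hkR.eventually_ge_atTop (2 * |s 0|))))).exists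
  apply hn.1
  have hL := hlam0 n
  simp only [Set.mem_ofPred_eq, abs_mul, abs_inv, abs_of_pos hL] at hτ
  obtain ⟨hτ1, hτ2⟩ := hτ
  have ht : |t| = lam n * ((lam n)⁻¹ * |t|) := by field_simp
  set τ := (lam n)⁻¹ * |t|
  refine ⟨t, htT, hlam n hn.2 t ?_ ?_⟩
  · rw [ht]
    have : 2 ≤ (k n : ℝ) * |s 0| := by rwa [div_le_iff₀ hpos] at h1
    have : 1 ≤ τ * (k n + 3) := by nlinarith [Nat.cast_nonneg (α := ℝ) (k n)]
    nlinarith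
  · rw [ht]
    gcongr
    linarith

lemma rub_continuous_pr : Continuous pr := continuous_quot_mk

lemma rub_isOpenMap_pr : IsOpenMap pr := by
  have : IsTopologicalGroup SL2C := Matrix.SpecialLinearGroup.topologicalGroup
  exact QuotientGroup.isOpenMap_coe

lemma rub_continuous_entry (i j : Fin 2) : Continuous (fun M : SL2C => M i j) := by
  have : Continuous (fun M : SL2C => (M : Matrix (Fin 2) (Fin 2) ℂ)) := continuous_subtype_val
  exact this.matrix_elem i j

lemma rub_pr_eq {A B : SL2C} (h : pr A = pr B) : B = A ∨ B = -A := by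
  have h1 : A⁻¹ * B ∈ Subgroup.center SL2C := QuotientGroup.eq.1 h
  obtain ⟨r, hr, hr2⟩ := Matrix.SpecialLinearGroup.mem_center_iff.1 h1
  have hB : (B : Matrix (Fin 2) (Fin 2) ℂ) = (A : Matrix (Fin 2) (Fin 2) ℂ) * Matrix.scalar (Fin 2) r := by
    rw [hr2, ← Matrix.SpecialLinearGroup.coe_mul, mul_inv_cancel_left]
  have hr3 : r = 1 ∨ r = -1 := by
    simpa using hr
  rcases hr3 with rfl | rfl
  · left
    ext i j
    rw [hB]; simp
  · right
    ext i j
    rw [hB]; simp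

lemma rub_pr_neg (A : SL2C) : pr (-A) = pr A := by
  symm
  apply QuotientGroup.eq.2
  apply Matrix.SpecialLinearGroup.mem_center_iff.2
  refine ⟨-1, by simp, ?_⟩
  rw [mul_neg, inv_mul_cancel]
  ext i j
  fin_cases i <;> fin_cases j <;> simp

/-- a continuous function on `PSL2C` detecting the upper right entry -/
lemma rub_exists_fun : ∃ f : PSL2C → ℝ, Continuous f ∧ ∀ M : SL2C, f (pr M) = ‖M 0 1‖ := by
  have hf : ∀ A B : SL2C, (QuotientGroup.leftRel (Subgroup.center SL2C)) A B →
      ‖A 0 1‖ = ‖B 0 1‖ := by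
    intro A B h
    have h' : pr A = pr B := Quotient.sound h
    rcases rub_pr_eq h' with rfl | rfl <;> simp
  refine ⟨Quotient.lift (fun M : SL2C => ‖M 0 1‖) hf, ?_, fun M => rfl⟩
  exact Continuous.quotient_lift (rub_continuous_entry 0 1).norm hf

lemma rub_tendsto_SL {ι : Type*} {F : Filter ι} {M : ι → SL2C} {A : SL2C}
    (h : ∀ i j, Tendsto (fun n => M n i j) F (nhds (A i j))) : Tendsto M F (nhds A) := by
  refine tendsto_subtype_rng.2 ?_
  exact tendsto_pi_nhds.2 fun i => tendsto_pi_nhds.2 fun j => h i j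

lemma rub_lift (g : ℕ → PSL2C) (hconv : Tendsto g atTop (nhds 1)) :
    ∃ G : ℕ → SL2C, (∀ n, pr (G n) = g n) ∧ Tendsto G atTop (nhds 1) := by
  have h1 : ∀ n, ∃ A : SL2C, pr A = g n ∧ 0 ≤ (A 0 0).re := by
    intro n
    obtain ⟨A, hA⟩ := QuotientGroup.mk'_surjective _ (g n)
    rcases le_total 0 (A 0 0).re with h | h
    · exact ⟨A, hA, h⟩
    · exact ⟨-A, (rub_pr_neg A).trans hA, by simpa using h⟩
  choose G hG hre using h1
  refine ⟨G, hG, ?_⟩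
  intro O hO
  have hO2 : {M : SL2C | 0 < (M 0 0).re} ∈ nhds (1 : SL2C) := by
    apply IsOpen.mem_nhds
    · exact isOpen_lt continuous_const (Complex.continuous_re.comp (rub_continuous_entry 0 0))
    · simp
  have h2 := rub_isOpenMap_pr.image_mem_nhds (inter_mem hO hO2)
  rw [map_one] at h2
  have h4 : ∀ᶠ n in atTop, g n ∈ pr '' (O ∩ {M : SL2C | 0 < (M 0 0).re}) := hconv h2
  change ∀ᶠ n in atTop, G n ∈ O
  filter_upwards [h4] with n hn
  obtain ⟨B, ⟨hB1, hB2⟩, hB⟩ := hn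
  rcases rub_pr_eq (hB.trans (hG n).symm) with h | h
  · rw [h]; exact hB1
  · exfalso
    have h3 := hre n
    rw [h] at h3
    simp at h3 hB2
    linarith

def rubD (G : SL2C) : ℝ := (G 0 0).re * (G 1 1).re - (G 0 1).re * (G 1 0).re
def rubP (G : SL2C) : ℝ := (G 1 1).im * (G 0 0).re - (G 1 0).im * (G 0 1).re
def rubQ (G : SL2C) : ℝ := (G 1 1).im * (G 1 0).re - (G 1 0).im * (G 1 1).re
def rubR (G : SL2C) : ℝ := (G 0 1).im * (G 0 0).re - (G 0 0).im * (G 0 1).re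

lemma rub_mul_entry (A B : SL2C) (i j : Fin 2) :
    (A * B) i j = A i 0 * B 0 j + A i 1 * B 1 j := by
  rw [Matrix.SpecialLinearGroup.coe_mul, Matrix.mul_apply, Fin.sum_univ_two]

lemma rub_map_entry (h : Matrix.SpecialLinearGroup (Fin 2) ℝ) (i j : Fin 2) :
    (Matrix.SpecialLinearGroup.map (algebraMap ℝ ℂ) h) i j = ((h i j : ℝ) : ℂ) := rfl

lemma rub_exists_h (G : SL2C) (hD : 0 < rubD G) (t : ℝ) :
    ∃ h : Matrix.SpecialLinearGroup (Fin 2) ℝ,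
      let M := uMat t * G * Matrix.SpecialLinearGroup.map (algebraMap ℝ ℂ) h
      let k : ℝ := (√(rubD G))⁻¹
      M 0 0 = ⟨k * rubD G, - (k * (rubP G + t * rubQ G))⟩ ∧
      M 0 1 = ⟨0, k * (rubR G + (2 * rubP G * t + rubQ G * t ^ 2))⟩ ∧
      M 1 0 = ⟨0, - (k * rubQ G)⟩ ∧
      M 1 1 = ⟨k * rubD G, k * (rubP G + t * rubQ G)⟩ := by
  set k : ℝ := (√(rubD G))⁻¹ with hk
  have hk2 : k ^ 2 * rubD G = 1 := by
    rw [hk, inv_pow, Real.sq_sqrt hD.le, inv_mul_cancel₀ hD.ne']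
  have hdet := G.det_coe
  rw [Matrix.det_fin_two] at hdet
  have him := congrArg Complex.im hdet
  simp at him
  obtain ⟨h, h00, h01, h10, h11⟩ : ∃ h : Matrix.SpecialLinearGroup (Fin 2) ℝ,
      h 0 0 = k * (G 1 1).re ∧ h 0 1 = -(k * ((G 0 1).re + t * (G 1 1).re)) ∧
      h 1 0 = -(k * (G 1 0).re) ∧ h 1 1 = k * ((G 0 0).re + t * (G 1 0).re) := by
    refine ⟨⟨!![k * (G 1 1).re, -(k * ((G 0 1).re + t * (G 1 1).re));
      -(k * (G 1 0).re), k * ((G 0 0).re + t * (G 1 0).re)], ?_⟩, rfl, rfl, rfl, rfl⟩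
    rw [Matrix.det_fin_two_of]
    rw [← hk2, rubD]; ring
  refine ⟨h, ?_⟩
  have m00 := rub_map_entry h 0 0
  have m01 := rub_map_entry h 0 1
  have m10 := rub_map_entry h 1 0
  have m11 := rub_map_entry h 1 1
  rw [h00] at m00
  rw [h01] at m01
  rw [h10] at m10
  rw [h11] at m11
  clear_value k
  generalize Matrix.SpecialLinearGroup.map (algebraMap ℝ ℂ) h = h' at *
  simp only [rub_mul_entry]
  simp only [m00, m01, m10, m11]
  clear hk hk2 m00 m01 m10 m11
  simp only [rubD, rubP, rubQ, rubR]
  refine ⟨?_, ?_, ?_, ?_⟩ <;> apply Complex.ext <;> simp [uMat]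
  all_goals first | ring1 | linear_combination k * him | linear_combination (-k) * him | linear_combination (k*t) * him | linear_combination (-k*t) * him

lemma rub_mem_VH (G : SL2C) (hD : 0 < rubD G) (hp : rubP G = 0) (hq : rubQ G = 0) :
    ∃ v ∈ Vset, ∃ h ∈ Hset, pr G = v * h := by
  obtain ⟨h, h1, h2, h3, h4⟩ := rub_exists_h G hD 0
  set k : ℝ := (√(rubD G))⁻¹ with hk
  have hk2 : k ^ 2 * rubD G = 1 := by
    rw [hk, inv_pow, Real.sq_sqrt hD.le, inv_mul_cancel₀ hD.ne']
  set M := uMat ((0 : ℝ) : ℂ) * G * Matrix.SpecialLinearGroup.map (algebraMap ℝ ℂ) h with hM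
  rw [hp, hq] at h1 h2 h4
  rw [hq] at h3
  have hdet := M.det_coe
  rw [Matrix.det_fin_two, h1, h2, h3, h4] at hdet
  have hre := congrArg Complex.re hdet
  simp at hre
  have hDk : k * rubD G = 1 := by
    have hkpos : 0 < k := by positivity
    have : 0 < k * rubD G := by positivity
    nlinarith
  rw [hDk] at h1 h4
  have hMu : M = uMat ((k * rubR G : ℝ) * Complex.I) := by
    ext i j
    fin_cases i <;> fin_cases j <;> simp [uMat, h1, h2, h3, h4] <;> apply Complex.ext <;> simp
  have hu0 : uMat ((0 : ℝ) : ℂ) = 1 := by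
    ext i j
    fin_cases i <;> fin_cases j <;> simp [uMat]
  refine ⟨vv (k * rubR G), ⟨_, rfl⟩,
    pr (Matrix.SpecialLinearGroup.map (algebraMap ℝ ℂ) h⁻¹), ⟨_, rfl⟩, ?_⟩
  rw [vv, ← map_mul, ← hMu, hM, hu0, one_mul, map_inv, mul_inv_cancel_right]

lemma rub_limit (T : ℕ → Set ℝ) (g : ℕ → PSL2C) (G : ℕ → SL2C) (hG : ∀ n, pr (G n) = g n)
    (hlim : Tendsto G atTop (nhds 1)) (φ : ℕ → ℕ) (hφ : StrictMono φ) (t : ℕ → ℝ)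
    (ht : ∀ j, t j ∈ T (φ j)) (s : ℝ)
    (hs : Tendsto (fun j => 2 * rubP (G (φ j)) * t j + rubQ (G (φ j)) * t j ^ 2) atTop (nhds s)) :
    vv s ∈ seqLimsup (fun n => {x | ∃ t ∈ T n, ∃ h ∈ Hset, x = uu t * g n * h}) := by
  have hG' : Tendsto (fun j => G (φ j)) atTop (nhds 1) := hlim.comp hφ.tendsto_atTop
  have hent : ∀ i j, Tendsto (fun n => G (φ n) i j) atTop (nhds ((1 : SL2C) i j)) := fun i j =>
    ((rub_continuous_entry i j).tendsto _).comp hG'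
  have hre : ∀ i j, Tendsto (fun n => (G (φ n) i j).re) atTop (nhds ((1 : SL2C) i j).re) :=
    fun i j => (Complex.continuous_re.tendsto _).comp (hent i j)
  have him : ∀ i j, Tendsto (fun n => (G (φ n) i j).im) atTop (nhds ((1 : SL2C) i j).im) :=
    fun i j => (Complex.continuous_im.tendsto _).comp (hent i j)
  have hDl : Tendsto (fun j => rubD (G (φ j))) atTop (nhds 1) := by
    have := ((hre 0 0).mul (hre 1 1)).sub ((hre 0 1).mul (hre 1 0))
    simpa [rubD] using this
  have hPl : Tendsto (fun j => rubP (G (φ j))) atTop (nhds 0) := by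
    have := ((him 1 1).mul (hre 0 0)).sub ((him 1 0).mul (hre 0 1))
    simpa [rubP] using this
  have hQl : Tendsto (fun j => rubQ (G (φ j))) atTop (nhds 0) := by
    have := ((him 1 1).mul (hre 1 0)).sub ((him 1 0).mul (hre 1 1))
    simpa [rubQ] using this
  have hRl : Tendsto (fun j => rubR (G (φ j))) atTop (nhds 0) := by
    have := ((him 0 1).mul (hre 0 0)).sub ((him 0 0).mul (hre 0 1))
    simpa [rubR] using this
  have hsq : Tendsto (fun j => rubP (G (φ j)) + t j * rubQ (G (φ j))) atTop (nhds 0) := by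
    have h1 := (hPl.mul hPl).add (hQl.mul hs)
    have h2 : Tendsto (fun j => (rubP (G (φ j)) + t j * rubQ (G (φ j))) ^ 2) atTop (nhds 0) := by
      convert h1 using 2
      · ring
      · simp
    have h3 := (Real.continuous_sqrt.tendsto _).comp h2
    simp only [Function.comp_def, Real.sqrt_sq_eq_abs, Real.sqrt_zero] at h3
    exact (tendsto_zero_iff_abs_tendsto_zero _).2 h3
  have hkl : Tendsto (fun j => (√(rubD (G (φ j))))⁻¹) atTop (nhds 1) := by
    have := ((Real.continuous_sqrt.tendsto _).comp hDl).inv₀ (by simp)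
    simpa [Function.comp_def] using this
  have hDpos : ∀ᶠ j in atTop, 0 < rubD (G (φ j)) := hDl.eventually_const_lt one_pos
  have hex : ∀ j, ∃ h : Matrix.SpecialLinearGroup (Fin 2) ℝ, 0 < rubD (G (φ j)) →
      let M := uMat (t j) * G (φ j) * Matrix.SpecialLinearGroup.map (algebraMap ℝ ℂ) h
      let k : ℝ := (√(rubD (G (φ j))))⁻¹
      M 0 0 = ⟨k * rubD (G (φ j)), - (k * (rubP (G (φ j)) + t j * rubQ (G (φ j))))⟩ ∧
      M 0 1 = ⟨0, k * (rubR (G (φ j)) + (2 * rubP (G (φ j)) * t j + rubQ (G (φ j)) * t j ^ 2))⟩ ∧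
      M 1 0 = ⟨0, - (k * rubQ (G (φ j)))⟩ ∧
      M 1 1 = ⟨k * rubD (G (φ j)), k * (rubP (G (φ j)) + t j * rubQ (G (φ j)))⟩ := by
    intro j
    by_cases hD : 0 < rubD (G (φ j))
    · obtain ⟨h, hh⟩ := rub_exists_h (G (φ j)) hD (t j)
      exact ⟨h, fun _ => hh⟩
    · exact ⟨1, fun h => absurd h hD⟩
  choose h hh using hex
  have cplx : ∀ (x y : ℕ → ℝ) (a b : ℝ), Tendsto x atTop (nhds a) → Tendsto y atTop (nhds b) →
      Tendsto (fun j => (⟨x j, y j⟩ : ℂ)) atTop (nhds ⟨a, b⟩) := by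
    intro x y a b hx hy
    have := (Complex.continuous_ofReal.tendsto _).comp hx |>.add
      (((Complex.continuous_ofReal.tendsto _).comp hy).mul_const Complex.I)
    simpa [Function.comp_def, Complex.mk_eq_add_mul_I] using this
  have hM : Tendsto (fun j => uMat (t j) * G (φ j) *
      Matrix.SpecialLinearGroup.map (algebraMap ℝ ℂ) (h j)) atTop
      (nhds (uMat (s * Complex.I))) := by
    apply rub_tendsto_SL
    intro i j
    have e00 : (uMat (s * Complex.I)) 0 0 = ⟨1 * 1, -(1 * 0)⟩ := by
      apply Complex.ext <;> simp [uMat]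
    have e01 : (uMat (s * Complex.I)) 0 1 = ⟨0, 1 * (0 + s)⟩ := by
      apply Complex.ext <;> simp [uMat]
    have e10 : (uMat (s * Complex.I)) 1 0 = ⟨0, -(1 * 0)⟩ := by
      apply Complex.ext <;> simp [uMat]
    have e11 : (uMat (s * Complex.I)) 1 1 = ⟨1 * 1, 1 * 0⟩ := by
      apply Complex.ext <;> simp [uMat]
    fin_cases i <;> fin_cases j <;> simp only [Fin.zero_eta, Fin.mk_one]
    · rw [e00]
      refine (cplx _ _ _ _ (hkl.mul hDl) (hkl.mul hsq).neg).congr' ?_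
      filter_upwards [hDpos] with j hj using (hh j hj).1.symm
    · rw [e01]
      refine (cplx _ _ _ _ tendsto_const_nhds (hkl.mul (hRl.add hs))).congr' ?_
      filter_upwards [hDpos] with j hj using (hh j hj).2.1.symm
    · rw [e10]
      refine (cplx _ _ _ _ tendsto_const_nhds (hkl.mul hQl).neg).congr' ?_
      filter_upwards [hDpos] with j hj using (hh j hj).2.2.1.symm
    · rw [e11]
      refine (cplx _ _ _ _ (hkl.mul hDl) (hkl.mul hsq)).congr' ?_
      filter_upwards [hDpos] with j hj using (hh j hj).2.2.2.symm
  have hpM := (rub_continuous_pr.tendsto _).comp hM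
  intro O hO
  apply Nat.frequently_atTop_iff_infinite.1
  have hev := hpM hO
  refine hφ.tendsto_atTop.frequently (Eventually.frequently ?_)
  filter_upwards [hev] with j hj
  refine ⟨_, hj, t j, ht j, _, ⟨h j, rfl⟩, ?_⟩
  simp only [Function.comp_def, map_mul, hG, uu]

lemma rub_main (T : ℕ → Set ℝ) (hT : HasAccumulatingRenormalizations T)
    (g : ℕ → PSL2C) (hconv : Tendsto g atTop (nhds 1))
    (hg : ∀ n, g n ∉ {x | ∃ v ∈ Vset, ∃ h ∈ Hset, x = v * h}) (l : ℕ → ℝ) (hl : ∀ K, 0 < l K) :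
    ∃ K : ℕ, ∃ s : ℝ, l K ≤ |s| ∧ |s| ≤ l K * ((K : ℝ) + 3) ^ 16 ∧
    vv s ∈ seqLimsup (fun n => {x | ∃ t ∈ T n, ∃ h ∈ Hset, x = uu t * g n * h}) := by
  obtain ⟨G, hG, hlim⟩ := rub_lift g hconv
  have hre : ∀ i j, Tendsto (fun n => (G n i j).re) atTop (nhds ((1 : SL2C) i j).re) :=
    fun i j => ((Complex.continuous_re.comp (rub_continuous_entry i j)).tendsto _).comp hlim
  have him : ∀ i j, Tendsto (fun n => (G n i j).im) atTop (nhds ((1 : SL2C) i j).im) :=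
    fun i j => ((Complex.continuous_im.comp (rub_continuous_entry i j)).tendsto _).comp hlim
  have hDl : Tendsto (fun j => rubD (G j)) atTop (nhds 1) := by
    have := ((hre 0 0).mul (hre 1 1)).sub ((hre 0 1).mul (hre 1 0))
    simpa [rubD] using this
  have hPl : Tendsto (fun j => 2 * rubP (G j)) atTop (nhds 0) := by
    have := (((him 1 1).mul (hre 0 0)).sub ((him 1 0).mul (hre 0 1))).const_mul 2
    simpa [rubP] using this
  have hQl : Tendsto (fun j => rubQ (G j)) atTop (nhds 0) := by
    have := ((him 1 1).mul (hre 1 0)).sub ((him 1 0).mul (hre 1 1))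
    simpa [rubQ] using this
  have hne : ∀ᶠ n in atTop, 0 < |2 * rubP (G n)| + |rubQ (G n)| := by
    filter_upwards [hDl.eventually_const_lt one_pos] with n hn
    by_contra hcon
    have h1 := abs_nonneg (2 * rubP (G n))
    have h2 := abs_nonneg (rubQ (G n))
    have h3 : 2 * rubP (G n) = 0 := abs_eq_zero.1 (by linarith)
    have h4 : rubQ (G n) = 0 := abs_eq_zero.1 (by linarith)
    apply hg n
    rw [← hG n]
    exact rub_mem_VH (G n) hn (by linarith) h4
  obtain ⟨K, hK⟩ := rub_core T hT _ _ l hPl hQl hne hl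
  obtain ⟨φ, hφ, hφ2⟩ := Filter.extraction_of_frequently_atTop hK
  choose t ht ht1 ht2 using hφ2
  have hcpt : IsCompact (Metric.closedBall (0 : ℝ) (l K * ((K : ℝ) + 3) ^ 16)) :=
    isCompact_closedBall _ _
  obtain ⟨s, -, ψ, hψ, hs⟩ := hcpt.tendsto_subseq
    (x := fun j => 2 * rubP (G (φ j)) * t j + rubQ (G (φ j)) * t j ^ 2)
    (fun j => by simpa using ht2 j)
  refine ⟨K, s, ?_, ?_, rub_limit T g G hG hlim (φ ∘ ψ) (hφ.comp hψ) (t ∘ ψ) (fun j => ht _) s hs⟩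
  · exact ge_of_tendsto' hs.abs fun j => ht1 _
  · exact le_of_tendsto' hs.abs fun j => ht2 _

lemma rub_continuous_vv : Continuous vv := by
  refine rub_continuous_pr.comp ?_
  refine continuous_iff_continuousAt.2 fun s => rub_tendsto_SL fun i j => ?_
  fin_cases i <;> fin_cases j <;> simp [uMat]
  exact ((Complex.continuous_ofReal.mul continuous_const).tendsto s)

lemma rub_vv_zero : vv 0 = 1 := by
  have : uMat (((0 : ℝ) : ℂ) * Complex.I) = 1 := by
    ext i j
    fin_cases i <;> fin_cases j <;> simp [uMat]
  rw [vv, this, map_one]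

/-- Refined unipotent blowup: if `(T_n)` has accumulating renormalizations and
`g_n → e` in `G - VH`, then `V ∩ limsup_n {u_t g_n h : t ∈ T_n, h ∈ H}`
accumulates at `e` and at `∞`. -/
theorem refined_unipotent_blowup_VH
    (T : ℕ → Set ℝ) (hT : HasAccumulatingRenormalizations T)
    (g : ℕ → PSL2C) (hconv : Tendsto g atTop (nhds 1))
    (hg : ∀ n, g n ∉ {x | ∃ v ∈ Vset, ∃ h ∈ Hset, x = v * h}) :
    AccumulatesAtIdAndInfty
      (Vset ∩ seqLimsup (fun n => {x | ∃ t ∈ T n, ∃ h ∈ Hset, x = uu t * g n * h})) := by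
  have main := rub_main T hT g hconv hg
  obtain ⟨f, hf, hfM⟩ := rub_exists_fun
  have hfv : ∀ s, f (vv s) = |s| := by
    intro s
    rw [vv, hfM]
    simp [uMat]
  constructor
  · have h1 : ∀ k : ℕ, ∃ s : ℝ, 0 < |s| ∧ |s| ≤ 1 / ((k : ℝ) + 1) ∧
        vv s ∈ seqLimsup (fun n => {x | ∃ t ∈ T n, ∃ h ∈ Hset, x = uu t * g n * h}) := by
      intro k
      have hl : ∀ K : ℕ, 0 < 1 / ((k : ℝ) + 1) / ((K : ℝ) + 3) ^ 16 := fun K => by positivity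
      obtain ⟨K, s, hs1, hs2, hs3⟩ := main _ hl
      refine ⟨s, (hl K).trans_le hs1, hs2.trans (le_of_eq ?_), hs3⟩
      exact div_mul_cancel₀ _ (by positivity)
    choose s hs1 hs2 hs3 using h1
    refine ⟨fun k => vv (s k), fun k => ⟨⟨⟨_, rfl⟩, hs3 k⟩, fun h => ?_⟩, ?_⟩
    · change vv (s k) = 1 at h
      have := hfv (s k)
      rw [h, ← rub_vv_zero, hfv, abs_zero] at this
      exact (hs1 k).ne this
    · have h0 : Tendsto s atTop (nhds 0) :=
        squeeze_zero_norm hs2 tendsto_one_div_add_atTop_nhds_zero_nat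
      have := (rub_continuous_vv.tendsto 0).comp h0
      rwa [rub_vv_zero] at this
  · have h1 : ∀ k : ℕ, ∃ s : ℝ, (k : ℝ) + 1 ≤ |s| ∧
        vv s ∈ seqLimsup (fun n => {x | ∃ t ∈ T n, ∃ h ∈ Hset, x = uu t * g n * h}) := by
      intro k
      obtain ⟨K, s, hs1, hs2, hs3⟩ := main (fun _ => (k : ℝ) + 1) (fun _ => by positivity)
      exact ⟨s, hs1, hs3⟩
    choose s hs1 hs3 using h1
    refine ⟨fun k => vv (s k), fun k => ⟨⟨_, rfl⟩, hs3 k⟩, fun K hK => ?_⟩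
    obtain ⟨C, hC⟩ := (hK.image hf).bddAbove
    filter_upwards [tendsto_natCast_atTop_atTop.eventually_ge_atTop C] with k hk hmem
    have := hC ⟨_, hmem, rfl⟩
    rw [hfv] at this
    have := hs1 k
    linarith


end
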